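/- Let G be an abelian group and let φ : G → G be an endomorphism. If either the Reidemeister number R(φ) or the number of fixed points of the induced map φ̂ on the unitary dual Ĝ (i.e. the number of characters χ of G with χ∘φ = χ) is finite, then the two numbers are equal: R(φ) = #Fix(φ̂). -/

import Mathlib

/-- The `φ`-twisted conjugacy class of `x`:
`x'` is in the class of `x` iff `x' = γ * x * φ(γ)⁻¹` for some `γ`. -/
def twistedClass {G : Type*} [Group G] (φ : G → G) (x : G) : Set G :=
  {x' | ∃ γ : G, x' = γ * x * (φ γ)⁻¹}

/-- The inclusion `ℚ / ℤ → ℝ / ℤ`. -/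
noncomputable def AddCircle.ratToReal : AddCircle (1 : ℚ) →+ AddCircle (1 : ℝ) :=
  QuotientAddGroup.map _ _ (Rat.castHom ℝ).toAddMonoidHom <| by
    rw [AddSubgroup.zmultiples_le]
    exact ⟨1, by simp⟩

theorem AddCircle.ratToReal_injective : Function.Injective AddCircle.ratToReal := by
  rw [injective_iff_map_eq_zero]
  intro x hx
  induction x using QuotientAddGroup.induction_on with | H q =>
  obtain ⟨n, hn⟩ := (AddCircle.coe_eq_zero_iff (1 : ℝ) (x := (q : ℝ))).1 hx
  refine (AddCircle.coe_eq_zero_iff (1 : ℚ)).2 ⟨n, ?_⟩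
  rw [zsmul_one] at hn ⊢
  exact_mod_cast hn

/-- Circle-valued characters separate the points of an abelian group. -/
theorem MonoidHom.exists_circle_apply_ne_one {Q : Type*} [CommGroup Q] {a : Q} (ha : a ≠ 1) :
    ∃ χ : Q →* Circle, χ a ≠ 1 := by
  obtain ⟨c, hc⟩ := CharacterModule.exists_character_apply_ne_zero_of_ne_zero
    (A := Additive Q) (a := Additive.ofMul a) (by simpa using ha)
  let ψ : Q →* Circle :=
    { toFun x := AddCircle.toCircle (AddCircle.ratToReal (c (Additive.ofMul x)))
      map_one' := by simp
      map_mul' x y := by simp [AddCircle.toCircle_add] }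
  refine ⟨ψ, fun h ↦ hc (AddCircle.ratToReal_injective ?_)⟩
  apply AddCircle.injective_toCircle (T := (1 : ℝ)) one_ne_zero
  simpa [ψ] using h

theorem card_circle_dual_of_finite (Q : Type*) [CommGroup Q] [Finite Q] :
    Finite (Q →* Circle) ∧ Nat.card (Q →* Circle) = Nat.card Q := by
  have e : (Q →* Circle) ≃ AddChar (Additive Q) ℂ :=
    AddChar.toMonoidHomEquiv (A := Additive Q) |>.symm.trans
      AddChar.circleEquivComplex.toEquiv
  have := Fintype.ofFinite (Additive Q)
  refine ⟨.of_equiv _ e.symm, ?_⟩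
  rw [Nat.card_congr e, Nat.card_eq_fintype_card, AddChar.card_eq, ← Nat.card_eq_fintype_card]
  exact Nat.card_congr Additive.toMul

theorem finite_of_finite_circle_dual (Q : Type*) [CommGroup Q] [Finite (Q →* Circle)] :
    Finite Q := by
  have := (card_circle_dual_of_finite (Q →* Circle)).1
  refine Finite.of_injective (MonoidHom.eval : Q →* (Q →* Circle) →* Circle) ?_
  rw [injective_iff_map_eq_one]
  intro a ha
  by_contra hne
  obtain ⟨χ, hχ⟩ := MonoidHom.exists_circle_apply_ne_one hne
  exact hχ (DFunLike.congr_fun ha χ)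

section TwistedConjugacy

variable {G : Type*} [CommGroup G] (φ : G →* G)

theorem mem_twistedClass_iff_div_mem_range {x y : G} :
    y ∈ twistedClass φ x ↔ y / x ∈ (MonoidHom.id G / φ).range := by
  refine exists_congr fun γ ↦ ?_
  rw [MonoidHom.div_apply, MonoidHom.id_apply, eq_comm, div_eq_div_iff_mul_eq_mul,
    mul_inv_eq_iff_eq_mul]

theorem twistedClass_eq_iff {x y : G} :
    twistedClass φ x = twistedClass φ y ↔
      (x : G ⧸ (MonoidHom.id G / φ).range) = y := by
  rw [eq_comm (a := (x : G ⧸ (MonoidHom.id G / φ).range)), QuotientGroup.eq, ← div_eq_inv_mul]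
  constructor
  · intro h
    rw [← mem_twistedClass_iff_div_mem_range, ← h, mem_twistedClass_iff_div_mem_range, div_self']
    exact one_mem _
  · intro h
    ext z
    rw [mem_twistedClass_iff_div_mem_range, mem_twistedClass_iff_div_mem_range,
      ← div_mul_div_cancel z x y, Subgroup.mul_mem_cancel_right _ h]

/-- The twisted conjugacy classes are the cosets of the image of `γ ↦ γ / φ γ`. -/
noncomputable def quotientEquivTwistedClasses :
    G ⧸ (MonoidHom.id G / φ).range ≃ Set.range (twistedClass φ) :=
  .ofBijective
    (Quotient.lift (fun x ↦ ⟨twistedClass φ x, x, rfl⟩) fun _ _ h ↦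
      Subtype.ext <| (twistedClass_eq_iff φ).2 <| Quotient.sound h)
    ⟨by
      rintro ⟨x⟩ ⟨y⟩ h
      exact (twistedClass_eq_iff φ).1 (congrArg Subtype.val h), by
      rintro ⟨_, x, rfl⟩
      exact ⟨(x : G ⧸ _), rfl⟩⟩

theorem comp_eq_self_iff_range_le_ker {A : Type*} [CommGroup A] (χ : G →* A) :
    χ.comp φ = χ ↔ (MonoidHom.id G / φ).range ≤ χ.ker := by
  rw [MonoidHom.range_le_ker_iff, DFunLike.ext_iff, DFunLike.ext_iff]
  simp [div_eq_one, eq_comm (a := χ (φ _))]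

/-- The fixed points of `φ̂` are the characters of the quotient by the image of `γ ↦ γ / φ γ`. -/
noncomputable def fixedCharactersEquiv :
    {χ : G →* Circle | χ.comp φ = χ} ≃ (G ⧸ (MonoidHom.id G / φ).range →* Circle) where
  toFun χ := QuotientGroup.lift _ χ.1 ((comp_eq_self_iff_range_le_ker φ χ.1).1 χ.2)
  invFun ψ := ⟨ψ.comp (QuotientGroup.mk' _), (comp_eq_self_iff_range_le_ker φ _).2 fun x hx ↦ by
    rw [MonoidHom.mem_ker, MonoidHom.comp_apply, QuotientGroup.mk'_apply,
      (QuotientGroup.eq_one_iff x).2 hx, map_one]⟩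
  left_inv _ := rfl
  right_inv ψ := by ext; rfl

end TwistedConjugacy


/-- **Twisted Burnside–Frobenius theorem for abelian groups.**
If `G` is an abelian group and `φ : G → G` an endomorphism, and if either the Reidemeister
number `R(φ)` (the number of `φ`-conjugacy classes) or the number of fixed points of `φ̂`
on the unitary dual (characters `χ : G →* Circle` with `χ ∘ φ = χ`) is finite, then the
two numbers are equal. -/
theorem twisted_burnside_frobenius_abelian {G : Type*} [CommGroup G] (φ : G →* G)
    (hfin : (Set.range (twistedClass ⇑φ)).Finite ∨
      {χ : G →* Circle | χ.comp φ = χ}.Finite) :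
    Nat.card (Set.range (twistedClass ⇑φ)) =
      Nat.card {χ : G →* Circle | χ.comp φ = χ} := by
  have hQ : Finite (G ⧸ (MonoidHom.id G / φ).range) := by
    rcases hfin with h | h
    · have := h.to_subtype
      exact .of_equiv _ (quotientEquivTwistedClasses φ).symm
    · have := h.to_subtype
      have := Finite.of_equiv _ (fixedCharactersEquiv φ)
      exact finite_of_finite_circle_dual _
  rw [← Nat.card_congr (quotientEquivTwistedClasses φ), Nat.card_congr (fixedCharactersEquiv φ),
    (card_circle_dual_of_finite _).2]
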